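/- For every s > 0 there exists C > 0 such that the following holds. Let u : ℝ³ → ℂ be twice differentiable with u, all first-order partial derivatives ∂_j u, and all second-order partial derivatives ∂_i∂_j u in L²(ℝ³), and ‖u‖_{L²} = 1; let α : ℝ³ → ℂ satisfy ‖α‖_{h_{1+s}} < ∞; and let V be the effective pair potential (the unique real V ∈ L² whose unnormalized Fourier transform equals v). Define m_α(x) = ∫ k B₀(k) e^{ik·x} α(k) dk ∈ ℂ³, (div m_α)(x) = i ∫ |k|² B₀(k) e^{ik·x} α(k) dk, F_α(x) = 2 Re m_α(x), and (h_{u,α}u)(x) = −Δu(x) − 2i (div m_α)(x) u(x) − 2i m_α(x)·∇u(x) − 2i \overline{m_α(x)}·∇u(x) + |F_α(x)|² u(x) + (∫ V(x−y)|u(y)|² dy) u(x) − μ_{u,α} u(x), where μ_{u,α} = (1/2)∫∫ V(x−y)|u(y)|²|u(x)|² dy dx + Re∫ \overline{α(k)} f_u(k) dk + Re∫ \overline{α(k)} g_{u,α}(k) dk. Then h_{u,α}u ∈ L²(ℝ³) and ‖h_{u,α}u‖_{L²} ≤ C (‖u‖_{H²} + ‖u‖_{H¹}²)(1 + ‖α‖_{h_s}²).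 -/

import Mathlib

open MeasureTheory
open scoped ENNReal

noncomputable section

/-- The dispersion relation `ω(k) = √(1+|k|²)` of the massive scalar field. -/
def ω (k : EuclideanSpace ℝ (Fin 3)) : ℝ := Real.sqrt (1 + ‖k‖ ^ 2)

/-- The Gross dressing form factor `B₀(k) = 1/(√(ω(k))·(|k|²+ω(k)))`. -/
def B0 (k : EuclideanSpace ℝ (Fin 3)) : ℝ := 1 / (Real.sqrt (ω k) * (‖k‖ ^ 2 + ω k))

/-- `v(k) = −4/(ω(k)(|k|²+ω(k))) + 2/(|k|²+ω(k))²`. -/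
def vker (k : EuclideanSpace ℝ (Fin 3)) : ℝ :=
  -4 / (ω k * (‖k‖ ^ 2 + ω k)) + 2 / (‖k‖ ^ 2 + ω k) ^ 2

/-- The `j`-th partial derivative of `u`. -/
def pd (u : EuclideanSpace ℝ (Fin 3) → ℂ) (j : Fin 3) (x : EuclideanSpace ℝ (Fin 3)) : ℂ :=
  fderiv ℝ u x (EuclideanSpace.single j 1)

/-- The second-order partial derivative `∂_i∂_j u`. -/
def pd2 (u : EuclideanSpace ℝ (Fin 3) → ℂ) (i j : Fin 3)
    (x : EuclideanSpace ℝ (Fin 3)) : ℂ :=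
  fderiv ℝ (fun y => pd u j y) x (EuclideanSpace.single i 1)

/-- The square of the `H¹`-norm. -/
def H1sq (u : EuclideanSpace ℝ (Fin 3) → ℂ) : ℝ :=
  (∫ x, ‖u x‖ ^ 2) + ∫ x, ‖fderiv ℝ u x‖ ^ 2

/-- The `H¹`-norm of `u`. -/
def H1norm (u : EuclideanSpace ℝ (Fin 3) → ℂ) : ℝ := Real.sqrt (H1sq u)

/-- The `H²`-norm of `u`. -/
def H2norm (u : EuclideanSpace ℝ (Fin 3) → ℂ) : ℝ :=
  Real.sqrt (H1sq u + ∑ i : Fin 3, ∑ j : Fin 3, ∫ x, ‖pd2 u i j x‖ ^ 2)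

/-- The weighted norm `‖α‖_{h_s} = (∫ ω(k)^{2s}|α(k)|² dk)^{1/2}`. -/
def hsNorm (s : ℝ) (α : EuclideanSpace ℝ (Fin 3) → ℂ) : ℝ :=
  Real.sqrt (∫ k, ω k ^ (2 * s) * ‖α k‖ ^ 2)

/-- The `j`-th component of `m_α(x) = ∫ k B₀(k) e^{ik·x} α(k) dk ∈ ℂ³`. -/
def mα (α : EuclideanSpace ℝ (Fin 3) → ℂ) (j : Fin 3) (x : EuclideanSpace ℝ (Fin 3)) : ℂ :=
  ∫ k, ((k j * B0 k : ℝ) : ℂ) * Complex.exp (Complex.I * ((inner ℝ k x : ℝ) : ℂ)) * α k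

/-- `(div m_α)(x) = i ∫ |k|² B₀(k) e^{ik·x} α(k) dk`. -/
def divmα (α : EuclideanSpace ℝ (Fin 3) → ℂ) (x : EuclideanSpace ℝ (Fin 3)) : ℂ :=
  Complex.I * ∫ k, ((‖k‖ ^ 2 * B0 k : ℝ) : ℂ) *
    Complex.exp (Complex.I * ((inner ℝ k x : ℝ) : ℂ)) * α k

/-- `F_α(x) = 2 Re m_α(x)`, componentwise. -/
def Fα (α : EuclideanSpace ℝ (Fin 3) → ℂ) (j : Fin 3) (x : EuclideanSpace ℝ (Fin 3)) : ℝ :=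
  2 * (mα α j x).re

/-- `f_u(k) = 2 k B₀(k) · ∫ e^{−ik·x} \bar u(x)(−i∇u(x)) dx`. -/
def fu (u : EuclideanSpace ℝ (Fin 3) → ℂ) (k : EuclideanSpace ℝ (Fin 3)) : ℂ :=
  ((2 * B0 k : ℝ) : ℂ) * ∑ j : Fin 3, ((k j : ℝ) : ℂ) *
    ∫ x, Complex.exp (-(Complex.I * ((inner ℝ k x : ℝ) : ℂ))) *
      (starRingEnd ℂ) (u x) * (-Complex.I * pd u j x)

/-- `g_{u,α}(k) = 2 k B₀(k) · ∫ e^{−ik·x} F_α(x) |u(x)|² dx`. -/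
def gualpha (u α : EuclideanSpace ℝ (Fin 3) → ℂ) (k : EuclideanSpace ℝ (Fin 3)) : ℂ :=
  ((2 * B0 k : ℝ) : ℂ) * ∑ j : Fin 3, ((k j : ℝ) : ℂ) *
    ∫ x, Complex.exp (-(Complex.I * ((inner ℝ k x : ℝ) : ℂ))) *
      ((Fα α j x : ℝ) : ℂ) * ((‖u x‖ ^ 2 : ℝ) : ℂ)

/-- The mean-field energy shift
`μ_{u,α} = ½∬ V(x−y)|u(y)|²|u(x)|² + Re⟨α, f_u⟩ + Re⟨α, g_{u,α}⟩`. -/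
def μshift (V : EuclideanSpace ℝ (Fin 3) → ℝ) (u α : EuclideanSpace ℝ (Fin 3) → ℂ) : ℝ :=
  (1 / 2) * (∫ x, ∫ y, V (x - y) * ‖u y‖ ^ 2 * ‖u x‖ ^ 2) +
    (∫ k, (starRingEnd ℂ) (α k) * fu u k).re +
    (∫ k, (starRingEnd ℂ) (α k) * gualpha u α k).re

/-- The dressed mean-field Hamiltonian `h_{u,α} = −Δ + A_α + F_α² + V∗|u|² − μ_{u,α}`
applied to `u`. -/
def hMF (V : EuclideanSpace ℝ (Fin 3) → ℝ) (u α : EuclideanSpace ℝ (Fin 3) → ℂ)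
    (x : EuclideanSpace ℝ (Fin 3)) : ℂ :=
  -(∑ j : Fin 3, pd2 u j j x)
    - 2 * Complex.I * divmα α x * u x
    - 2 * Complex.I * ∑ j : Fin 3, mα α j x * pd u j x
    - 2 * Complex.I * ∑ j : Fin 3, (starRingEnd ℂ) (mα α j x) * pd u j x
    + (((∑ j : Fin 3, Fα α j x ^ 2 : ℝ)) : ℂ) * u x
    + (((∫ y, V (x - y) * ‖u y‖ ^ 2 : ℝ)) : ℂ) * u x
    - ((μshift V u α : ℝ) : ℂ) * u x

section

lemma aux_CS_norm {X F G : Type*} [MeasurableSpace X] {μ : Measure X} [NormedAddCommGroup F] [NormedAddCommGroup G]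
    {f : X → F} {g : X → G} (hf : MemLp f 2 μ) (hg : MemLp g 2 μ) :
    Integrable (fun x => ‖f x‖ * ‖g x‖) μ ∧
    ∫ x, ‖f x‖ * ‖g x‖ ∂μ ≤ √(∫ x, ‖f x‖ ^ 2 ∂μ) * √(∫ x, ‖g x‖ ^ 2 ∂μ) := by
  have h2 : ENNReal.ofReal 2 = 2 := by norm_num
  refine ⟨(hf.norm).integrable_mul hg.norm, ?_⟩
  have := integral_mul_le_Lp_mul_Lq_of_nonneg (μ := μ) (p := 2) (q := 2)
    (Real.HolderConjugate.two_two)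
    (f := fun x => ‖f x‖) (g := fun x => ‖g x‖) (by filter_upwards with x; simp)
    (by filter_upwards with x; simp) (by rw [h2]; exact hf.norm) (by rw [h2]; exact hg.norm)
  simpa [Real.sqrt_eq_rpow] using this

lemma aux_CS {X : Type*} [MeasurableSpace X] {μ : Measure X}
    {f g : X → ℂ} (hf : MemLp f 2 μ) (hg : MemLp g 2 μ) :
    ‖∫ x, f x * g x ∂μ‖ ≤ √(∫ x, ‖f x‖ ^ 2 ∂μ) * √(∫ x, ‖g x‖ ^ 2 ∂μ) := by
  refine (norm_integral_le_integral_norm _).trans ?_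
  simp only [norm_mul]
  exact (aux_CS_norm hf hg).2

open SchwartzMap Laplacian LineDeriv FourierTransform Real

lemma aux_resolvent : ∃ K : ℝ, 0 ≤ K ∧ ∀ φ : SchwartzMap (EuclideanSpace ℝ (Fin 3)) ℂ,
    ∃ G : SchwartzMap (EuclideanSpace ℝ (Fin 3)) ℂ,
      φ = G - ((2 * π) ^ 2)⁻¹ • (Δ G) ∧
      √(∫ x, ‖G x‖ ^ 2) ≤ K * ∫ x, ‖φ x‖ := by
  refine ⟨√(∫ k : EuclideanSpace ℝ (Fin 3), ((1 : ℝ) + ‖k‖ ^ 2) ^ (-(4:ℝ) / 2)), by positivity, fun φ => ?_⟩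
  have hg : (fun k : EuclideanSpace ℝ (Fin 3) => ((1 : ℝ) + ‖k‖ ^ 2) ^ (-1 : ℝ)).HasTemperateGrowth := by
    fun_prop
  have hn : (fun k : EuclideanSpace ℝ (Fin 3) => ‖k‖ ^ 2).HasTemperateGrowth := by
    fun_prop
  have hint : Integrable (fun k : EuclideanSpace ℝ (Fin 3) => ((1 : ℝ) + ‖k‖ ^ 2) ^ (-(4:ℝ) / 2)) := 
    integrable_rpow_neg_one_add_norm_sq (by simp; norm_num)
  refine ⟨fourierMultiplierCLM ℂ (fun k => ((1 : ℝ) + ‖k‖ ^ 2) ^ (-1 : ℝ)) φ, ?_, ?_⟩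
  · rw [laplacian_eq_fourierMultiplierCLM, fourierMultiplierCLM_fourierMultiplierCLM_apply hn hg]
    rw [neg_smul, smul_neg, sub_neg_eq_add, smul_smul, inv_mul_cancel₀ (by positivity), one_smul]
    rw [fourierMultiplierCLM_apply, fourierMultiplierCLM_apply, ← FourierTransform.fourierInv_add]
    have : smulLeftCLM ℂ (fun k : EuclideanSpace ℝ (Fin 3) => ((1 : ℝ) + ‖k‖ ^ 2) ^ (-1 : ℝ)) (𝓕 φ) +
        smulLeftCLM ℂ ((fun k : EuclideanSpace ℝ (Fin 3) => ‖k‖ ^ 2) *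
          (fun k => ((1 : ℝ) + ‖k‖ ^ 2) ^ (-1 : ℝ))) (𝓕 φ) = 𝓕 φ := by
      apply SchwartzMap.ext
      intro x
      rw [_root_.add_apply, smulLeftCLM_apply_apply hg, smulLeftCLM_apply_apply (hn.mul hg), ← add_smul]
      have : (0:ℝ) < 1 + ‖x‖ ^ 2 := by positivity
      simp only [Pi.mul_apply, Real.rpow_neg_one]
      rw [show (1 + ‖x‖ ^ 2)⁻¹ + ‖x‖ ^ 2 * (1 + ‖x‖ ^ 2)⁻¹ = 1 by field_simp, one_smul]
    exact (FourierTransform.fourierInv_fourier_eq φ).symm.trans (congrArg _ this.symm)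
  · rw [← SchwartzMap.integral_norm_sq_fourier]
    have h1 : ∀ k, ‖(𝓕 (fourierMultiplierCLM ℂ (fun k => ((1 : ℝ) + ‖k‖ ^ 2) ^ (-1 : ℝ)) φ)) k‖ ^ 2 ≤ 
       (∫ x, ‖φ x‖) ^ 2 * ((1 : ℝ) + ‖k‖ ^ 2) ^ (-(4:ℝ) / 2) := by
      intro k
      rw [fourierMultiplierCLM_apply, FourierTransform.fourier_fourierInv_eq, smulLeftCLM_apply_apply hg]
      have := norm_fourier_apply_le_toLp_one φ k
      rw [norm_toLp_one] at this
      rw [norm_smul, mul_pow, mul_comm]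
      gcongr
      rw [Real.norm_of_nonneg (by positivity), ← Real.rpow_natCast, ← Real.rpow_mul (by positivity)]
      norm_num
    have h2 : ∫ k, ‖(𝓕 (fourierMultiplierCLM ℂ (fun k => ((1 : ℝ) + ‖k‖ ^ 2) ^ (-1 : ℝ)) φ)) k‖ ^ 2 ≤ 
       (∫ x, ‖φ x‖) ^ 2 * ∫ k : EuclideanSpace ℝ (Fin 3), ((1 : ℝ) + ‖k‖ ^ 2) ^ (-(4:ℝ) / 2) := by
      rw [← integral_const_mul]
      apply integral_mono_of_nonneg (by filter_upwards with x; positivity) (hint.const_mul _)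
      filter_upwards with k using h1 k
    refine (Real.sqrt_le_sqrt h2).trans ?_
    rw [Real.sqrt_mul (by positivity), Real.sqrt_sq (by positivity), mul_comm]

end

section

open SchwartzMap Laplacian LineDeriv FourierTransform Real

lemma aux_ibp {f : EuclideanSpace ℝ (Fin 3) → ℂ} (hf : Differentiable ℝ f) (j : Fin 3)
    (h2 : MemLp f 2 volume) (h2' : MemLp (fun x => pd f j x) 2 volume)
    (G : SchwartzMap (EuclideanSpace ℝ (Fin 3)) ℂ) :
    ∫ x, f x * (∂_{EuclideanSpace.single j (1:ℝ)} G) x = - ∫ x, pd f j x * G x := by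
  have e : ∀ x, (∂_{EuclideanSpace.single j (1:ℝ)} G) x = fderiv ℝ G x (EuclideanSpace.single j 1) :=
    fun x => lineDerivOp_apply_eq_fderiv _ _ _
  simp only [e]
  apply integral_mul_fderiv_eq_neg_fderiv_mul_of_integrable
  · exact h2'.integrable_mul (G.memLp 2)
  · simp only [← e]
    exact h2.integrable_mul (SchwartzMap.memLp _ 2 volume)
  · exact h2.integrable_mul (G.memLp 2)
  · intro x _; exact hf x
  · intro x _; exact G.differentiable x

lemma aux_pd_memLp {u : EuclideanSpace ℝ (Fin 3) → ℂ} (h : MemLp (fun x => fderiv ℝ u x) 2 volume)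
    (j : Fin 3) : MemLp (fun x => pd u j x) 2 volume := by
  unfold pd
  exact (ContinuousLinearMap.apply ℝ ℂ (EuclideanSpace.single j (1:ℝ))).comp_memLp' h

lemma aux_pd_le (u : EuclideanSpace ℝ (Fin 3) → ℂ) (j : Fin 3) (x : EuclideanSpace ℝ (Fin 3)) :
    ‖pd u j x‖ ≤ ‖fderiv ℝ u x‖ := by
  unfold pd
  simpa using (fderiv ℝ u x).le_opNorm (EuclideanSpace.single j (1:ℝ))

lemma aux_H1sq_nonneg (u : EuclideanSpace ℝ (Fin 3) → ℂ) : 0 ≤ H1sq u := by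
  unfold H1sq; positivity

lemma aux_H2_l2 (u : EuclideanSpace ℝ (Fin 3) → ℂ) : √(∫ x, ‖u x‖ ^ 2) ≤ H2norm u := by
  unfold H2norm H1sq
  apply Real.sqrt_le_sqrt
  have : 0 ≤ ∫ x, ‖fderiv ℝ u x‖ ^ 2 := by positivity
  have : 0 ≤ ∑ i : Fin 3, ∑ j : Fin 3, ∫ x, ‖pd2 u i j x‖ ^ 2 := by positivity
  linarith

lemma aux_H2_H1 (u : EuclideanSpace ℝ (Fin 3) → ℂ) : H1norm u ≤ H2norm u := by
  unfold H2norm H1norm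
  apply Real.sqrt_le_sqrt
  have : 0 ≤ ∑ i : Fin 3, ∑ j : Fin 3, ∫ x, ‖pd2 u i j x‖ ^ 2 := by positivity
  linarith

lemma aux_H2_grad (u : EuclideanSpace ℝ (Fin 3) → ℂ) : √(∫ x, ‖fderiv ℝ u x‖ ^ 2) ≤ H2norm u := by
  unfold H2norm H1sq
  apply Real.sqrt_le_sqrt
  have : 0 ≤ ∫ x, ‖u x‖ ^ 2 := by positivity
  have : 0 ≤ ∑ i : Fin 3, ∑ j : Fin 3, ∫ x, ‖pd2 u i j x‖ ^ 2 := by positivity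
  linarith

lemma aux_H2_pd2 (u : EuclideanSpace ℝ (Fin 3) → ℂ) (i j : Fin 3) :
    √(∫ x, ‖pd2 u i j x‖ ^ 2) ≤ H2norm u := by
  unfold H2norm
  apply Real.sqrt_le_sqrt
  have h1 : ∫ x, ‖pd2 u i j x‖ ^ 2 ≤ ∑ j : Fin 3, ∫ x, ‖pd2 u i j x‖ ^ 2 :=
    Finset.single_le_sum (f := fun j => ∫ x, ‖pd2 u i j x‖ ^ 2) (fun _ _ => by positivity) (Finset.mem_univ j)
  have h2 : ∑ j : Fin 3, ∫ x, ‖pd2 u i j x‖ ^ 2 ≤ ∑ i : Fin 3, ∑ j : Fin 3, ∫ x, ‖pd2 u i j x‖ ^ 2 :=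
    Finset.single_le_sum (f := fun i => ∑ j : Fin 3, ∫ x, ‖pd2 u i j x‖ ^ 2) (fun _ _ => by positivity) (Finset.mem_univ i)
  have := aux_H1sq_nonneg u
  linarith

lemma aux_lap {u : EuclideanSpace ℝ (Fin 3) → ℂ} (hu : Differentiable ℝ u)
    (hu' : ∀ j : Fin 3, Differentiable ℝ (fun x => pd u j x))
    (h0 : MemLp u 2 volume) (h1 : MemLp (fun x => fderiv ℝ u x) 2 volume)
    (h2 : ∀ i j : Fin 3, MemLp (fun x => pd2 u i j x) 2 volume)
    (G : SchwartzMap (EuclideanSpace ℝ (Fin 3)) ℂ) :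
    ∫ x, u x * (Δ G) x = ∑ j : Fin 3, ∫ x, pd2 u j j x * G x := by
  rw [laplacian_eq_sum (EuclideanSpace.basisFun (Fin 3) ℝ)]
  simp only [_root_.sum_apply, Finset.mul_sum]
  rw [integral_finsetSum]
  · apply Finset.sum_congr rfl
    intro j _
    rw [EuclideanSpace.basisFun_apply, aux_ibp hu j h0 (aux_pd_memLp h1 j),
      aux_ibp (hu' j) j (aux_pd_memLp h1 j) (h2 j j), neg_neg]
    rfl
  · intro j _
    exact h0.integrable_mul (SchwartzMap.memLp _ 2 volume)

lemma aux_dual : ∃ K : ℝ, 0 ≤ K ∧ ∀ u : EuclideanSpace ℝ (Fin 3) → ℂ, Differentiable ℝ u →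
    (∀ j : Fin 3, Differentiable ℝ (fun x => pd u j x)) →
    MemLp u 2 volume → MemLp (fun x => fderiv ℝ u x) 2 volume →
    (∀ i j : Fin 3, MemLp (fun x => pd2 u i j x) 2 volume) →
    ∀ φ : SchwartzMap (EuclideanSpace ℝ (Fin 3)) ℂ,
      ‖∫ x, u x * φ x‖ ≤ K * H2norm u * ∫ x, ‖φ x‖ := by
  obtain ⟨K, hK, h⟩ := aux_resolvent
  refine ⟨(1 + ((2 * π) ^ 2)⁻¹ * 3) * K, by positivity, ?_⟩
  intro u hu hu' h0 h1 h2 φ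
  obtain ⟨G, hG, hGn⟩ := h φ
  have e1 : ∫ x, u x * φ x = (∫ x, u x * G x) - (((2 * π) ^ 2)⁻¹ : ℝ) • ∫ x, u x * (Δ G) x := by
    rw [← integral_smul, ← integral_sub]
    · congr 1
      ext x
      conv_lhs => rw [hG]
      rw [_root_.sub_apply, _root_.smul_apply, mul_sub, mul_smul_comm]
    · exact h0.integrable_mul (SchwartzMap.memLp _ 2 volume)
    · exact (h0.integrable_mul (SchwartzMap.memLp _ 2 volume)).smul (((2 * π) ^ 2)⁻¹ : ℝ)
  rw [e1, aux_lap hu hu' h0 h1 h2]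
  have hGm : MemLp G 2 volume := G.memLp 2
  set g := √(∫ x, ‖G x‖ ^ 2) with hg
  have b1 : ‖∫ x, u x * G x‖ ≤ H2norm u * g :=
    (aux_CS h0 hGm).trans (by gcongr; exact aux_H2_l2 u)
  have b2 : ‖∑ j : Fin 3, ∫ x, pd2 u j j x * G x‖ ≤ 3 * (H2norm u * g) := by
    refine (norm_sum_le _ _).trans ?_
    refine (Finset.sum_le_card_nsmul _ _ (H2norm u * g) ?_).trans (by simp)
    intro j _
    exact (aux_CS (h2 j j) hGm).trans (by gcongr; exact aux_H2_pd2 u j j)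
  have hH : 0 ≤ H2norm u := Real.sqrt_nonneg _
  calc _ ≤ ‖∫ x, u x * G x‖ + ‖(((2 * π) ^ 2)⁻¹ : ℝ) • ∑ j : Fin 3, ∫ x, pd2 u j j x * G x‖ := norm_sub_le _ _
    _ ≤ H2norm u * g + ((2 * π) ^ 2)⁻¹ * (3 * (H2norm u * g)) := by
      rw [norm_smul, Real.norm_of_nonneg (by positivity)]
      gcongr
    _ = (1 + ((2 * π) ^ 2)⁻¹ * 3) * H2norm u * g := by ring
    _ ≤ (1 + ((2 * π) ^ 2)⁻¹ * 3) * H2norm u * (K * ∫ x, ‖φ x‖) := by gcongr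
    _ = _ := by ring

open Filter Topology Convolution ContDiff in
lemma aux_sobolev : ∃ K : ℝ, 0 ≤ K ∧ ∀ u : EuclideanSpace ℝ (Fin 3) → ℂ, Differentiable ℝ u →
    (∀ j : Fin 3, Differentiable ℝ (fun x => pd u j x)) →
    MemLp u 2 volume → MemLp (fun x => fderiv ℝ u x) 2 volume →
    (∀ i j : Fin 3, MemLp (fun x => pd2 u i j x) 2 volume) →
    ∀ x, ‖u x‖ ≤ K * H2norm u := by
  obtain ⟨K, hK, h⟩ := aux_dual
  refine ⟨K, hK, ?_⟩
  intro u hu hu' h0 h1 h2 x₀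
  let φ : ℕ → ContDiffBump (0 : EuclideanSpace ℝ (Fin 3)) := fun n =>
    ⟨1 / ((n:ℝ) + 1) / 2, 1 / ((n:ℝ) + 1), by positivity, half_lt_self (by positivity)⟩
  have hφ : Tendsto (fun n => (φ n).rOut) atTop (𝓝 0) := tendsto_one_div_add_atTop_nhds_zero_nat
  have ht := (ContDiffBump.convolution_tendsto_right_of_continuous (μ := volume) hφ hu.continuous x₀).norm
  refine le_of_tendsto ht (Eventually.of_forall fun n => ?_)
  have hc : HasCompactSupport (fun t => (((φ n).normed volume (x₀ - t) : ℝ) : ℂ)) := by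
    have := ((φ n).hasCompactSupport_normed (μ := volume)).comp_homeomorph (Homeomorph.subLeft x₀)
    exact this.comp_left (g := fun r : ℝ => (r : ℂ)) (by simp)
  have hs : ContDiff ℝ ∞ (fun t => (((φ n).normed volume (x₀ - t) : ℝ) : ℂ)) := by
    exact Complex.ofRealCLM.contDiff.comp ((φ n).contDiff_normed.comp (contDiff_const.sub contDiff_id))
  have := h u hu hu' h0 h1 h2 (hc.toSchwartzMap hs)
  have e2 : ∫ x, ‖(((φ n).normed volume (x₀ - x) : ℝ) : ℂ)‖ = 1 := by
    simp only [Complex.norm_real, Real.norm_of_nonneg ((φ n).nonneg_normed _)]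
    rw [integral_sub_left_eq_self (fun x => (φ n).normed volume x), ContDiffBump.integral_normed]
  change ‖∫ x, u x * (((φ n).normed volume (x₀ - x) : ℝ) : ℂ)‖ ≤ K * H2norm u * ∫ x, ‖(((φ n).normed volume (x₀ - x) : ℝ) : ℂ)‖ at this
  rw [e2, mul_one] at this
  rw [convolution_eq_swap]
  have e3 : ∀ t, ((ContinuousLinearMap.lsmul ℝ ℝ) ((φ n).normed volume (x₀ - t))) (u t) =
      u t * (((φ n).normed volume (x₀ - t) : ℝ) : ℂ) := fun t =>
    (Complex.real_smul (x := (φ n).normed volume (x₀ - t)) (z := u t)).trans (mul_comm _ _)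
  simp_rw [e3]
  exact this

end

section

open SchwartzMap Laplacian LineDeriv FourierTransform Real

lemma aux_memLp_locInt {f : EuclideanSpace ℝ (Fin 3) → ℂ} (hf : MemLp f 2 volume) :
    LocallyIntegrable f volume := hf.locallyIntegrable (by norm_num)

open ContDiff in
lemma aux_plancherel {β : EuclideanSpace ℝ (Fin 3) → ℂ} (h1 : Integrable β volume)
    (h2 : MemLp β 2 volume) : MemLp (𝓕 β) 2 volume ∧ ∫ x, ‖𝓕 β x‖ ^ 2 = ∫ x, ‖β x‖ ^ 2 := by
  set f : Lp (α := EuclideanSpace ℝ (Fin 3)) ℂ 2 := h2.toLp β with hf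
  have hcont : Continuous (𝓕 β) :=
    VectorFourier.fourierIntegral_continuous Real.continuous_fourierChar continuous_inner h1
  have hT : ∀ g : SchwartzMap (EuclideanSpace ℝ (Fin 3)) ℂ,
      ∫ x, g x • (𝓕 f : Lp (α := EuclideanSpace ℝ (Fin 3)) ℂ 2 volume) x = ∫ x, g x • 𝓕 β x := by
    intro g
    have := congrArg (fun T => T g) (Lp.fourier_toTemperedDistribution_eq f)
    simp only [TemperedDistribution.fourier_apply, Lp.toTemperedDistribution_apply] at this
    rw [← this]
    have h3 := VectorFourier.integral_fourierIntegral_smul_eq_flip (μ := volume) (ν := volume) (e := 𝐞) (L := innerₗ (EuclideanSpace ℝ (Fin 3)))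
      (f := β) (g := g) Real.continuous_fourierChar continuous_inner h1 g.integrable
    rw [flip_innerₗ] at h3
    calc _ = ∫ x, β x • (𝓕 g) x := by
            apply integral_congr_ae
            filter_upwards [h2.coeFn_toLp] with x hx
            rw [hx, smul_eq_mul, smul_eq_mul, mul_comm]
      _ = ∫ x, 𝓕 β x • g x := h3.symm
      _ = _ := by simp only [smul_eq_mul, mul_comm]
  have hae : ∀ᵐ x, (𝓕 f : Lp (α := EuclideanSpace ℝ (Fin 3)) ℂ 2 volume) x = 𝓕 β x := by
    apply ae_eq_of_integral_contDiff_smul_eq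
    · exact aux_memLp_locInt (Lp.memLp _)
    · exact hcont.locallyIntegrable
    · intro g hg hc
      have hc' : HasCompactSupport (fun x => ((g x : ℝ) : ℂ)) :=
        hc.comp_left (g := fun r : ℝ => (r : ℂ)) (by simp)
      have hs : ContDiff ℝ ∞ (fun x => ((g x : ℝ) : ℂ)) := Complex.ofRealCLM.contDiff.comp hg
      have := hT (hc'.toSchwartzMap hs)
      change ∫ x, ((g x : ℝ) : ℂ) • _ = ∫ x, ((g x : ℝ) : ℂ) • _ at this
      simpa only [Complex.coe_smul] using this
  have hm : MemLp (𝓕 β) 2 volume := (memLp_congr_ae hae).1 (Lp.memLp _)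
  refine ⟨hm, ?_⟩
  have hn := Lp.norm_fourier_eq f
  have key : ∀ h : Lp (α := EuclideanSpace ℝ (Fin 3)) ℂ 2, ‖h‖ ^ 2 = ∫ x, ‖h x‖ ^ 2 := by
    intro h
    have := L2.inner_def (𝕜 := ℂ) h h
    rw [inner_self_eq_norm_sq_to_K] at this
    simp only [inner_self_eq_norm_sq_to_K] at this
    have e : ∫ a, ((‖h a‖ : ℝ) : ℂ) ^ 2 = ((∫ a, ‖h a‖ ^ 2 : ℝ) : ℂ) := by
      rw [← integral_complex_ofReal]; congr 1; ext x; push_cast; rfl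
    have h5 := this.trans e
    exact Complex.ofReal_injective ((by push_cast; rfl : ((‖h‖ ^ 2 : ℝ) : ℂ) = _).trans h5)
  have := key (𝓕 f)
  rw [hn, key f] at this
  calc _ = ∫ x, ‖(𝓕 f : Lp (α := EuclideanSpace ℝ (Fin 3)) ℂ 2 volume) x‖ ^ 2 := by
        apply integral_congr_ae; filter_upwards [hae] with x hx; rw [hx]
    _ = _ := this.symm
    _ = _ := by apply integral_congr_ae; filter_upwards [h2.coeFn_toLp] with x hx; rw [hx]

lemma aux_bessel {β : EuclideanSpace ℝ (Fin 3) → ℂ} (h1 : Integrable β volume)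
    (h2 : MemLp β 2 volume) :
    MemLp (fun x => ∫ k, Complex.exp (Complex.I * ((inner ℝ k x : ℝ) : ℂ)) * β k) 2 volume ∧
    ∫ x, ‖∫ k, Complex.exp (Complex.I * ((inner ℝ k x : ℝ) : ℂ)) * β k‖ ^ 2 = 
      (2 * π) ^ 3 * ∫ x, ‖β x‖ ^ 2 := by
  have e : ∀ x, ∫ k, Complex.exp (Complex.I * ((inner ℝ k x : ℝ) : ℂ)) * β k =
      𝓕 β ((-(2 * π)⁻¹ : ℝ) • x) := by
    intro x
    rw [Real.fourier_eq']
    congr 1; ext k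
    rw [smul_eq_mul, inner_smul_right]
    congr 2
    have : (π : ℂ) ≠ 0 := by exact_mod_cast Real.pi_ne_zero
    push_cast
    field_simp
  have hcont : Continuous (𝓕 β) :=
    VectorFourier.fourierIntegral_continuous Real.continuous_fourierChar continuous_inner h1
  obtain ⟨p1, p2⟩ := aux_plancherel h1 h2
  have hne : (-(2 * π)⁻¹ : ℝ) ≠ 0 := neg_ne_zero.2 (by positivity)
  simp only [e]
  constructor
  · rw [memLp_two_iff_integrable_sq_norm (by fun_prop)]
    exact ((memLp_two_iff_integrable_sq_norm p1.1).1 p1).comp_smul hne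
  · rw [Measure.integral_comp_smul volume (fun x => ‖𝓕 β x‖ ^ 2), p2]
    simp only [finrank_euclideanSpace, Fintype.card_fin, smul_eq_mul]
    congr 1
    rw [← inv_pow, inv_neg, inv_inv, abs_pow, abs_neg, abs_of_pos (by positivity)]

open ContDiff in
lemma aux_V_unique {V W : EuclideanSpace ℝ (Fin 3) → ℝ} (hV : MemLp V 2 volume) (hW : MemLp W 2 volume)
    (h : ∀ φ : SchwartzMap (EuclideanSpace ℝ (Fin 3)) ℂ,
        (∫ x, ((V x : ℝ) : ℂ) *
            ∫ k, Complex.exp (-(Complex.I * ((inner ℝ k x : ℝ) : ℂ))) * φ k) =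
        (∫ x, ((W x : ℝ) : ℂ) *
            ∫ k, Complex.exp (-(Complex.I * ((inner ℝ k x : ℝ) : ℂ))) * φ k)) : V =ᵐ[volume] W := by
  have hV' : MemLp (fun x => (V x : ℂ)) 2 volume := hV.ofReal
  have hW' : MemLp (fun x => (W x : ℂ)) 2 volume := hW.ofReal
  have : ∀ᵐ x, (V x : ℂ) = W x := by
    apply ae_eq_of_integral_contDiff_smul_eq (aux_memLp_locInt hV') (aux_memLp_locInt hW')
    intro g hg hc
    have hc' : HasCompactSupport (fun x => ((g x : ℝ) : ℂ)) :=
      hc.comp_left (g := fun r : ℝ => (r : ℂ)) (by simp)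
    have hs : ContDiff ℝ ∞ (fun x => ((g x : ℝ) : ℂ)) := Complex.ofRealCLM.contDiff.comp hg
    have hpi : (2 * π) ≠ 0 := by positivity
    let L : EuclideanSpace ℝ (Fin 3) ≃L[ℝ] EuclideanSpace ℝ (Fin 3) :=
      ContinuousLinearEquiv.smulLeft (Units.mk0 (2 * π) hpi)
    let ψ := SchwartzMap.compCLMOfContinuousLinearEquiv ℝ L (hc'.toSchwartzMap hs)
    have hψ : ∀ x, ψ x = ((g ((2 * π) • x) : ℝ) : ℂ) := fun x => rfl
    have := h (𝓕⁻ ψ)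
    have e : ∀ x, ∫ k, Complex.exp (-(Complex.I * ((inner ℝ k x : ℝ) : ℂ))) * (𝓕⁻ ψ) k =
        ((g x : ℝ) : ℂ) := by
      intro x
      have h1 : (𝓕 (𝓕⁻ ψ)) ((2 * π)⁻¹ • x) = ((g x : ℝ) : ℂ) := by
        rw [FourierTransform.fourier_fourierInv_eq, hψ, smul_smul, mul_inv_cancel₀ hpi, one_smul]
      rw [← h1, SchwartzMap.fourier_coe, Real.fourier_eq']
      congr 1; ext k
      rw [smul_eq_mul, inner_smul_right]
      congr 2
      have : (π : ℂ) ≠ 0 := by exact_mod_cast Real.pi_ne_zero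
      push_cast
      field_simp
    simp only [e] at this
    simp only [Complex.real_smul]
    simpa only [mul_comm] using this
  filter_upwards [this] with x hx
  exact_mod_cast hx

end

section

open Real

lemma aux_one_le_ω (k : EuclideanSpace ℝ (Fin 3)) : 1 ≤ ω k := by
  unfold ω; rw [Real.one_le_sqrt]; nlinarith [sq_nonneg ‖k‖]

lemma aux_ω_pos (k : EuclideanSpace ℝ (Fin 3)) : 0 < ω k := one_pos.trans_le (aux_one_le_ω k)

lemma aux_ω_sq (k : EuclideanSpace ℝ (Fin 3)) : ω k ^ 2 = 1 + ‖k‖ ^ 2 := by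
  unfold ω; rw [Real.sq_sqrt (by positivity)]

lemma aux_ω_cont : Continuous ω := by unfold ω; fun_prop

lemma aux_ω_rpow_cont (γ : ℝ) : Continuous (fun k => ω k ^ γ) :=
  aux_ω_cont.rpow_const (fun k => Or.inl (aux_ω_pos k).ne')

lemma aux_B0_cont : Continuous B0 := by
  unfold B0
  have := aux_ω_cont
  refine Continuous.div continuous_const (by fun_prop) fun k => ?_
  have := aux_ω_pos k
  positivity

lemma aux_B0_nonneg (k : EuclideanSpace ℝ (Fin 3)) : 0 ≤ B0 k := by
  unfold B0
  have := aux_ω_pos k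
  positivity

lemma aux_B0_le (k : EuclideanSpace ℝ (Fin 3)) : B0 k ≤ ω k ^ (-(5 / 2) : ℝ) := by
  unfold B0
  have h0 := aux_ω_pos k
  have h1 := aux_one_le_ω k
  have h2 := aux_ω_sq k
  rw [Real.rpow_neg h0.le, one_div]
  apply inv_anti₀ (by positivity)
  have : ω k ^ (5 / 2 : ℝ) = √(ω k) * ω k ^ 2 := by
    rw [Real.sqrt_eq_rpow, ← Real.rpow_natCast (ω k) 2, ← Real.rpow_add h0]; norm_num
  rw [this]
  gcongr
  linarith

lemma aux_norm_le_ω (k : EuclideanSpace ℝ (Fin 3)) : ‖k‖ ≤ ω k := by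
  have := aux_ω_sq k
  exact abs_le_of_sq_le_sq' (by linarith) (aux_ω_pos k).le |>.2

lemma aux_kB (k : EuclideanSpace ℝ (Fin 3)) (j : Fin 3) :
    |k j| * B0 k ≤ ω k ^ (-(3 / 2) : ℝ) := by
  have h0 := aux_ω_pos k
  have h1 : |k j| ≤ ω k := by
    have := PiLp.norm_apply_le k j
    rw [Real.norm_eq_abs] at this
    exact this.trans (aux_norm_le_ω k)
  calc _ ≤ ω k * ω k ^ (-(5 / 2) : ℝ) :=
        mul_le_mul h1 (aux_B0_le k) (aux_B0_nonneg k) h0.le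
    _ = ω k ^ (1 : ℝ) * ω k ^ (-(5 / 2) : ℝ) := by rw [Real.rpow_one]
    _ = _ := by rw [← Real.rpow_add h0]; norm_num

lemma aux_k2B (k : EuclideanSpace ℝ (Fin 3)) :
    ‖k‖ ^ 2 * B0 k ≤ ω k ^ (-(1 / 2) : ℝ) := by
  have h0 := aux_ω_pos k
  have h1 : ‖k‖ ^ 2 ≤ ω k ^ (2 : ℝ) := by
    rw [Real.rpow_two, aux_ω_sq]; linarith
  calc _ ≤ ω k ^ (2 : ℝ) * ω k ^ (-(5 / 2) : ℝ) :=
        mul_le_mul h1 (aux_B0_le k) (aux_B0_nonneg k) (by positivity)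
    _ = _ := by rw [← Real.rpow_add h0]; norm_num

lemma aux_w_memLp {s : ℝ} (hs : 0 < s) : MemLp (fun k => ω k ^ (-(3 / 2 + s))) 2 volume := by
  rw [memLp_two_iff_integrable_sq_norm (aux_ω_rpow_cont _).aestronglyMeasurable]
  have := integrable_rpow_neg_one_add_norm_sq (E := EuclideanSpace ℝ (Fin 3)) (μ := volume)
    (r := 3 + 2 * s) (by simp; linarith)
  refine this.congr (Filter.Eventually.of_forall fun k => ?_)
  have h0 := aux_ω_pos k
  simp only
  symm
  rw [Real.norm_of_nonneg (by positivity), ← aux_ω_sq, ← Real.rpow_natCast (ω k ^ _) 2,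
    ← Real.rpow_natCast (ω k) 2, ← Real.rpow_mul h0.le, ← Real.rpow_mul h0.le]
  congr 1
  push_cast; ring

lemma aux_α_memLp {s : ℝ} {α : EuclideanSpace ℝ (Fin 3) → ℂ} (hα : Measurable α)
    (h : ∫⁻ k, ENNReal.ofReal (ω k ^ (2 * (1 + s)) * ‖α k‖ ^ 2) < ⊤) {γ : ℝ} (hγ : γ ≤ 1 + s) :
    MemLp (fun k => ω k ^ γ * ‖α k‖) 2 volume := by
  have m : ∀ δ : ℝ, AEStronglyMeasurable (fun k => ω k ^ δ * ‖α k‖) volume := fun δ =>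
    ((aux_ω_rpow_cont δ).measurable.mul hα.norm).aestronglyMeasurable
  have h1 : MemLp (fun k => ω k ^ (1 + s) * ‖α k‖) 2 volume := by
    rw [memLp_two_iff_integrable_sq_norm (m _)]
    refine ⟨(m _).norm.pow 2, ?_⟩
    rw [hasFiniteIntegral_iff_norm]
    refine lt_of_eq_of_lt (lintegral_congr fun k => ?_) h
    congr 1
    have h0 := aux_ω_pos k
    rw [Real.norm_of_nonneg (by positivity), Real.norm_of_nonneg (by positivity), mul_pow,
      ← Real.rpow_natCast (ω k ^ _) 2, ← Real.rpow_mul h0.le, mul_comm (1 + s)]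
    norm_num
  refine h1.mono (m _) (Filter.Eventually.of_forall fun k => ?_)
  have h0 := aux_ω_pos k
  rw [Real.norm_of_nonneg (by positivity), Real.norm_of_nonneg (by positivity)]
  gcongr
  exact aux_one_le_ω k

lemma aux_hs_eq (s : ℝ) (α : EuclideanSpace ℝ (Fin 3) → ℂ) :
    hsNorm s α = √(∫ k, ‖ω k ^ s * ‖α k‖‖ ^ 2) := by
  unfold hsNorm
  congr 2; ext k
  have h0 := aux_ω_pos k
  rw [Real.norm_of_nonneg (by positivity), mul_pow,
      ← Real.rpow_natCast (ω k ^ _) 2, ← Real.rpow_mul h0.le, mul_comm s]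
  norm_num

lemma aux_P {s : ℝ} (hs : 0 < s) {α : EuclideanSpace ℝ (Fin 3) → ℂ} (hα : Measurable α)
    (h : ∫⁻ k, ENNReal.ofReal (ω k ^ (2 * (1 + s)) * ‖α k‖ ^ 2) < ⊤) :
    Integrable (fun k => ω k ^ (-(3 / 2) : ℝ) * ‖α k‖) volume ∧
    ∫ k, ω k ^ (-(3 / 2) : ℝ) * ‖α k‖ ≤ √(∫ k, ‖ω k ^ (-(3 / 2 + s))‖ ^ 2) * hsNorm s α := by
  have := aux_CS_norm (aux_w_memLp hs) (aux_α_memLp hα h (γ := s) (by linarith))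
  rw [← aux_hs_eq] at this
  have e : (fun k => ω k ^ (-(3 / 2) : ℝ) * ‖α k‖) =
      fun k => ‖ω k ^ (-(3 / 2 + s))‖ * ‖ω k ^ s * ‖α k‖‖ := by
    ext k
    have h0 := aux_ω_pos k
    rw [Real.norm_of_nonneg (by positivity), Real.norm_of_nonneg (by positivity), ← mul_assoc,
      ← Real.rpow_add h0]
    ring_nf
  rw [e]
  exact this

lemma aux_Q {s : ℝ} (hs : 0 < s) {α : EuclideanSpace ℝ (Fin 3) → ℂ} (hα : Measurable α)
    (h : ∫⁻ k, ENNReal.ofReal (ω k ^ (2 * (1 + s)) * ‖α k‖ ^ 2) < ⊤) :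
    Integrable (fun k => ω k ^ (-(1 / 2) : ℝ) * ‖α k‖) volume := by
  have := (aux_CS_norm (aux_w_memLp hs) (aux_α_memLp hα h (γ := 1 + s) le_rfl)).1
  convert this using 2 with k
  have h0 := aux_ω_pos k
  rw [Real.norm_of_nonneg (by positivity), Real.norm_of_nonneg (by positivity), ← mul_assoc,
      ← Real.rpow_add h0]
  ring_nf

lemma aux_exp_norm (r : ℝ) : ‖Complex.exp (Complex.I * (r : ℂ))‖ = 1 := by
  rw [mul_comm, Complex.norm_exp_ofReal_mul_I]

lemma aux_exp_norm' (r : ℝ) : ‖Complex.exp (-(Complex.I * (r : ℂ)))‖ = 1 := by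
  have := aux_exp_norm (-r)
  simpa using this

lemma aux_m_integrand (α : EuclideanSpace ℝ (Fin 3) → ℂ) (j : Fin 3) (x k : EuclideanSpace ℝ (Fin 3)) :
    ‖((k j * B0 k : ℝ) : ℂ) * Complex.exp (Complex.I * ((inner ℝ k x : ℝ) : ℂ)) * α k‖ ≤
      ω k ^ (-(3 / 2) : ℝ) * ‖α k‖ := by
  rw [norm_mul, norm_mul, aux_exp_norm, mul_one, Complex.norm_real, Real.norm_eq_abs, abs_mul,
    abs_of_nonneg (aux_B0_nonneg k)]
  gcongr
  exact aux_kB k j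

lemma aux_m_bound {s : ℝ} (hs : 0 < s) {α : EuclideanSpace ℝ (Fin 3) → ℂ} (hα : Measurable α)
    (h : ∫⁻ k, ENNReal.ofReal (ω k ^ (2 * (1 + s)) * ‖α k‖ ^ 2) < ⊤) (j : Fin 3) :
    Continuous (mα α j) ∧ ∀ x, ‖mα α j x‖ ≤ √(∫ k, ‖ω k ^ (-(3 / 2 + s))‖ ^ 2) * hsNorm s α := by
  obtain ⟨p1, p2⟩ := aux_P hs hα h
  constructor
  · unfold mα
    refine continuous_of_dominated (bound := fun k => ω k ^ (-(3 / 2) : ℝ) * ‖α k‖) ?_ ?_ p1 ?_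
    · intro x
      have := aux_B0_cont
      have h3 : Continuous (fun k : EuclideanSpace ℝ (Fin 3) => ((k j * B0 k : ℝ) : ℂ) * Complex.exp (Complex.I * ((inner ℝ k x : ℝ) : ℂ))) := by
        fun_prop
      exact (h3.measurable.mul hα).aestronglyMeasurable
    · intro x
      exact Filter.Eventually.of_forall fun k => aux_m_integrand α j x k
    · refine Filter.Eventually.of_forall fun k => ?_
      fun_prop
  · intro x
    exact (norm_integral_le_of_norm_le p1 (Filter.Eventually.of_forall fun k => aux_m_integrand α j x k)).trans p2

lemma aux_divm {s : ℝ} (hs : 0 < s) {α : EuclideanSpace ℝ (Fin 3) → ℂ} (hα : Measurable α)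
    (h : ∫⁻ k, ENNReal.ofReal (ω k ^ (2 * (1 + s)) * ‖α k‖ ^ 2) < ⊤) :
    MemLp (divmα α) 2 volume ∧ √(∫ x, ‖divmα α x‖ ^ 2) ≤ √((2 * π) ^ 3) * hsNorm s α := by
  set β : EuclideanSpace ℝ (Fin 3) → ℂ := fun k => ((‖k‖ ^ 2 * B0 k : ℝ) : ℂ) * α k with hβ
  have hm : AEStronglyMeasurable β volume := by
    have := aux_B0_cont
    have h3 : Continuous (fun k : EuclideanSpace ℝ (Fin 3) => ((‖k‖ ^ 2 * B0 k : ℝ) : ℂ)) := by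
        fun_prop
    exact (h3.measurable.mul hα).aestronglyMeasurable
  have hb : ∀ k, ‖β k‖ ≤ ω k ^ (-(1 / 2) : ℝ) * ‖α k‖ := by
    intro k
    have := aux_B0_nonneg k
    rw [hβ]; simp only
    rw [norm_mul, Complex.norm_real, Real.norm_of_nonneg (by positivity)]
    gcongr
    exact aux_k2B k
  have hb' : ∀ k, ‖β k‖ ≤ ‖ω k ^ s * ‖α k‖‖ := by
    intro k
    have h0 := aux_ω_pos k
    rw [Real.norm_of_nonneg (by positivity)]
    refine (hb k).trans ?_
    gcongr
    · exact aux_one_le_ω k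
    · linarith
  have hI : Integrable β volume := (aux_Q hs hα h).mono' hm (Filter.Eventually.of_forall hb)
  have hs2 := aux_α_memLp hα h (γ := s) (by linarith)
  have h2 : MemLp β 2 volume := hs2.mono hm (Filter.Eventually.of_forall hb')
  obtain ⟨q1, q2⟩ := aux_bessel hI h2
  have e : divmα α = fun x => Complex.I * ∫ k, Complex.exp (Complex.I * ((inner ℝ k x : ℝ) : ℂ)) * β k := by
    ext x
    unfold divmα
    congr 2; ext k; rw [hβ]; ring
  constructor
  · rw [e]; exact q1.const_mul _
  · have e2 : ∀ x, ‖divmα α x‖ = ‖∫ k, Complex.exp (Complex.I * ((inner ℝ k x : ℝ) : ℂ)) * β k‖ := by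
      intro x; rw [e]; simp only; rw [norm_mul, Complex.norm_I, one_mul]
    simp only [e2]
    rw [q2, Real.sqrt_mul (by positivity), aux_hs_eq]
    gcongr
    · exact (memLp_two_iff_integrable_sq_norm h2.1).1 h2
    · exact (memLp_two_iff_integrable_sq_norm hs2.1).1 hs2
    · intro k
      have := hb' k
      simp only
      gcongr

lemma aux_f_bound {u : EuclideanSpace ℝ (Fin 3) → ℂ} (h1 : MemLp u 2 volume)
    (h2 : MemLp (fun x => fderiv ℝ u x) 2 volume) (k : EuclideanSpace ℝ (Fin 3)) :
    ‖fu u k‖ ≤ 6 * (√(∫ x, ‖u x‖ ^ 2) * √(∫ x, ‖fderiv ℝ u x‖ ^ 2)) * ω k ^ (-(3 / 2) : ℝ) := by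
  obtain ⟨c1, c2⟩ := aux_CS_norm h1 h2
  set D := √(∫ x, ‖u x‖ ^ 2) * √(∫ x, ‖fderiv ℝ u x‖ ^ 2)
  have hI : ∀ j : Fin 3, ‖∫ x, Complex.exp (-(Complex.I * ((inner ℝ k x : ℝ) : ℂ))) *
      (starRingEnd ℂ) (u x) * (-Complex.I * pd u j x)‖ ≤ D := by
    intro j
    refine (norm_integral_le_of_norm_le c1 (Filter.Eventually.of_forall fun x => ?_)).trans c2
    rw [norm_mul, norm_mul, aux_exp_norm', one_mul, norm_mul, norm_neg, Complex.norm_I, one_mul,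
      RCLike.norm_conj]
    gcongr
    exact aux_pd_le ..
  have hD : 0 ≤ D := by positivity
  unfold fu
  rw [Finset.mul_sum]
  calc _ ≤ ∑ j : Fin 3, 2 * ω k ^ (-(3 / 2) : ℝ) * D := by
        refine norm_sum_le_of_le _ fun j _ => ?_
        rw [← mul_assoc, norm_mul]
        refine mul_le_mul ?_ (hI j) (norm_nonneg _) (by have := aux_ω_pos k; positivity)
        rw [norm_mul, Complex.norm_real, Complex.norm_real, norm_mul, Real.norm_of_nonneg (aux_B0_nonneg k),
          Real.norm_eq_abs, Real.norm_eq_abs]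
        have := aux_kB k j
        rw [abs_of_pos (by norm_num : (0:ℝ) < 2)]
        linarith
    _ = _ := by simp; ring

lemma aux_g_bound {u α : EuclideanSpace ℝ (Fin 3) → ℂ} (h1 : MemLp u 2 volume)
    {M : ℝ} (hM : ∀ j x, ‖mα α j x‖ ≤ M) (k : EuclideanSpace ℝ (Fin 3)) :
    ‖gualpha u α k‖ ≤ 12 * (M * ∫ x, ‖u x‖ ^ 2) * ω k ^ (-(3 / 2) : ℝ) := by
  have c1 : Integrable (fun x => 2 * M * ‖u x‖ ^ 2) volume :=
    ((memLp_two_iff_integrable_sq_norm h1.1).1 h1).const_mul _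
  have hM0 : 0 ≤ M := (norm_nonneg _).trans (hM 0 0)
  set D := M * ∫ x, ‖u x‖ ^ 2
  have hI : ∀ j : Fin 3, ‖∫ x, Complex.exp (-(Complex.I * ((inner ℝ k x : ℝ) : ℂ))) *
      ((Fα α j x : ℝ) : ℂ) * ((‖u x‖ ^ 2 : ℝ) : ℂ)‖ ≤ 2 * D := by
    intro j
    refine (norm_integral_le_of_norm_le c1 (Filter.Eventually.of_forall fun x => ?_)).trans ?_
    · rw [norm_mul, norm_mul, aux_exp_norm', one_mul, Complex.norm_real, Complex.norm_real,
        Real.norm_of_nonneg (by positivity : 0 ≤ ‖u x‖ ^ 2)]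
      gcongr
      unfold Fα
      rw [norm_mul, Real.norm_eq_abs, Real.norm_eq_abs, abs_of_pos (by norm_num : (0:ℝ) < 2)]
      have := (Complex.abs_re_le_norm (mα α j x)).trans (hM j x)
      linarith
    · rw [integral_const_mul]; exact (mul_assoc _ _ _).le
  have hD : 0 ≤ D := mul_nonneg hM0 (integral_nonneg fun _ => by positivity)
  unfold gualpha
  rw [Finset.mul_sum]
  calc _ ≤ ∑ j : Fin 3, 2 * ω k ^ (-(3 / 2) : ℝ) * (2 * D) := by
        refine norm_sum_le_of_le _ fun j _ => ?_
        rw [← mul_assoc, norm_mul]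
        refine mul_le_mul ?_ (hI j) (norm_nonneg _) (by have := aux_ω_pos k; positivity)
        rw [norm_mul, Complex.norm_real, Complex.norm_real, norm_mul, Real.norm_of_nonneg (aux_B0_nonneg k),
          Real.norm_eq_abs, Real.norm_eq_abs]
        have := aux_kB k j
        rw [abs_of_pos (by norm_num : (0:ℝ) < 2)]
        linarith
    _ = _ := by simp; ring

lemma aux_pair_bound {s : ℝ} (hs : 0 < s) {α : EuclideanSpace ℝ (Fin 3) → ℂ} (hα : Measurable α)
    (h : ∫⁻ k, ENNReal.ofReal (ω k ^ (2 * (1 + s)) * ‖α k‖ ^ 2) < ⊤)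
    {f : EuclideanSpace ℝ (Fin 3) → ℂ} {D : ℝ} (hD : 0 ≤ D)
    (hf : ∀ k, ‖f k‖ ≤ D * ω k ^ (-(3 / 2) : ℝ)) :
    |(∫ k, (starRingEnd ℂ) (α k) * f k).re| ≤
      D * (√(∫ k, ‖ω k ^ (-(3 / 2 + s))‖ ^ 2) * hsNorm s α) := by
  obtain ⟨p1, p2⟩ := aux_P hs hα h
  refine (Complex.abs_re_le_norm _).trans ?_
  refine (norm_integral_le_of_norm_le (p1.const_mul D) (Filter.Eventually.of_forall fun k => ?_)).trans ?_
  · rw [norm_mul, RCLike.norm_conj]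
    calc _ ≤ ‖α k‖ * (D * ω k ^ (-(3 / 2) : ℝ)) := by gcongr; exact hf k
      _ = _ := by ring
  · rw [integral_const_mul]; gcongr

lemma aux_V_conv {V : EuclideanSpace ℝ (Fin 3) → ℝ} (hV : MemLp V 2 volume)
    {u : EuclideanSpace ℝ (Fin 3) → ℂ} (hu : MemLp u 2 volume) {S : ℝ} (hS : ∀ x, ‖u x‖ ≤ S)
    (h1 : ∫ x, ‖u x‖ ^ 2 = 1) :
    AEStronglyMeasurable (fun x => ∫ y, V (x - y) * ‖u y‖ ^ 2) volume ∧
    ∀ x, |∫ y, V (x - y) * ‖u y‖ ^ 2| ≤ √(∫ x, ‖V x‖ ^ 2) * S := by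
  have hS0 : 0 ≤ S := (norm_nonneg _).trans (hS 0)
  constructor
  · have hq : Measure.QuasiMeasurePreserving
        (fun p : EuclideanSpace ℝ (Fin 3) × EuclideanSpace ℝ (Fin 3) => p.1 - p.2)
        (volume.prod volume) volume := quasiMeasurePreserving_sub _ _
    have m1 := hV.1.comp_quasiMeasurePreserving hq
    have m2 : AEStronglyMeasurable (fun p : EuclideanSpace ℝ (Fin 3) × EuclideanSpace ℝ (Fin 3) => ‖u p.2‖ ^ 2) (volume.prod volume) :=
      (hu.1.comp_snd).norm.pow 2
    exact (m1.mul m2).integral_prod_right'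
  · intro x
    have hVx : MemLp (fun y => V (x - y)) 2 volume :=
      hV.comp_measurePreserving (Measure.measurePreserving_sub_left volume x)
    have i2 := (memLp_two_iff_integrable_sq_norm hu.1).1 hu
    have hb : ∀ y, ‖(‖u y‖ ^ 2 : ℝ)‖ ^ 2 ≤ S ^ 2 * ‖u y‖ ^ 2 := by
      intro y
      rw [Real.norm_of_nonneg (by positivity), sq (‖u y‖ ^ 2)]
      gcongr
      exact hS y
    have hu2 : MemLp (fun y => ‖u y‖ ^ 2) 2 volume := by
      refine (memLp_two_iff_integrable_sq_norm (hu.1.norm.pow 2)).2 ?_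
      refine (i2.const_mul (S ^ 2)).mono' ((hu.1.norm.pow 2).norm.pow 2) (Filter.Eventually.of_forall fun y => ?_)
      rw [Real.norm_of_nonneg (by positivity)]
      exact hb y
    obtain ⟨c1, c2⟩ := aux_CS_norm hVx hu2
    rw [← Real.norm_eq_abs]
    refine (norm_integral_le_of_norm_le c1 (Filter.Eventually.of_forall fun y => ?_)).trans (c2.trans ?_)
    · rw [norm_mul]
    · rw [integral_sub_left_eq_self (fun z => ‖V z‖ ^ 2) volume x]
      gcongr
      rw [Real.sqrt_le_left hS0]
      calc _ ≤ ∫ y, S ^ 2 * ‖u y‖ ^ 2 :=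
            integral_mono ((memLp_two_iff_integrable_sq_norm hu2.1).1 hu2) (i2.const_mul _) hb
        _ = _ := by rw [integral_const_mul, h1, mul_one]

/-- Bookkeeping predicate: square-integrable with norm at most `c`. -/
def auxBd (f : EuclideanSpace ℝ (Fin 3) → ℂ) (c : ℝ) : Prop :=
  0 ≤ c ∧ MemLp f 2 volume ∧ eLpNorm f 2 volume ≤ ENNReal.ofReal c

lemma auxBd.add {f g : EuclideanSpace ℝ (Fin 3) → ℂ} {c d : ℝ} (hf : auxBd f c) (hg : auxBd g d) :
    auxBd (fun x => f x + g x) (c + d) :=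
  ⟨add_nonneg hf.1 hg.1, hf.2.1.add hg.2.1, by
    rw [ENNReal.ofReal_add hf.1 hg.1]
    exact (eLpNorm_add_le hf.2.1.1 hg.2.1.1 (by norm_num)).trans (add_le_add hf.2.2 hg.2.2)⟩

lemma auxBd.sub {f g : EuclideanSpace ℝ (Fin 3) → ℂ} {c d : ℝ} (hf : auxBd f c) (hg : auxBd g d) :
    auxBd (fun x => f x - g x) (c + d) :=
  ⟨add_nonneg hf.1 hg.1, hf.2.1.sub hg.2.1, by
    rw [ENNReal.ofReal_add hf.1 hg.1]
    exact (eLpNorm_sub_le hf.2.1.1 hg.2.1.1 (by norm_num)).trans (add_le_add hf.2.2 hg.2.2)⟩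

lemma auxBd.mono {f : EuclideanSpace ℝ (Fin 3) → ℂ} {c d : ℝ} (hf : auxBd f c) (h : c ≤ d) :
    auxBd f d := ⟨hf.1.trans h, hf.2.1, hf.2.2.trans (ENNReal.ofReal_le_ofReal h)⟩

lemma aux_eLp {E : Type*} [NormedAddCommGroup E] {g : EuclideanSpace ℝ (Fin 3) → E}
    (hg : MemLp g 2 volume) : eLpNorm g 2 volume = ENNReal.ofReal (√(∫ x, ‖g x‖ ^ 2)) := by
  rw [hg.eLpNorm_eq_integral_rpow_norm (by norm_num) (by norm_num), Real.sqrt_eq_rpow]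
  norm_num

lemma aux_bd_of_le {E : Type*} [NormedAddCommGroup E] {f : EuclideanSpace ℝ (Fin 3) → ℂ}
    {g : EuclideanSpace ℝ (Fin 3) → E} {c d : ℝ} (hc : 0 ≤ c)
    (hf : AEStronglyMeasurable f volume) (hg : MemLp g 2 volume)
    (h : ∀ x, ‖f x‖ ≤ c * ‖g x‖) (hd : √(∫ x, ‖g x‖ ^ 2) ≤ d) : auxBd f (c * d) := by
  have hd0 : 0 ≤ d := (Real.sqrt_nonneg _).trans hd
  refine ⟨mul_nonneg hc hd0, hg.of_le_mul hf (Filter.Eventually.of_forall h), ?_⟩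
  refine (eLpNorm_le_mul_eLpNorm_of_ae_le_mul (Filter.Eventually.of_forall h) 2).trans ?_
  rw [aux_eLp hg, ENNReal.ofReal_mul hc]
  gcongr

end

section

open Real

lemma aux_hMF_bd {s : ℝ} (hs : 0 < s) {K : ℝ} (hK : 0 ≤ K) {v : ℝ} (hv : 0 ≤ v)
    {V : EuclideanSpace ℝ (Fin 3) → ℝ} (hV : MemLp V 2 volume) (hVv : √(∫ x, ‖V x‖ ^ 2) ≤ v)
    {u α : EuclideanSpace ℝ (Fin 3) → ℂ} (hK' : ∀ x, ‖u x‖ ≤ K * H2norm u)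
    (hu : Differentiable ℝ u)
    (hu1 : MemLp u 2 volume) (hu2 : MemLp (fun x => fderiv ℝ u x) 2 volume)
    (hu3 : ∀ i j : Fin 3, MemLp (fun x => pd2 u i j x) 2 volume)
    (hn : ∫ x, ‖u x‖ ^ 2 = 1) (hα : Measurable α)
    (h : ∫⁻ k, ENNReal.ofReal (ω k ^ (2 * (1 + s)) * ‖α k‖ ^ 2) < ⊤)
    {M P N a : ℝ} (hM : M = √(∫ k, ‖ω k ^ (-(3 / 2 + s))‖ ^ 2)) (hP : P = √((2 * π) ^ 3))
    (hN : N = H2norm u) (ha : a = hsNorm s α) :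
    auxBd (hMF V u α) (((1 * N + 1 * N + 1 * N) + (2 * (K * N)) * (P * a)
      + (6 * (M * a)) * N + (6 * (M * a)) * N + 12 * (M * a) ^ 2 * 1 + (v * (K * N)) * 1)
      + (1 / 2 * (v * (K * N)) + (6 * N) * (M * a) + 12 * (M * a) * (M * a)) * 1) := by
  have hM0 : 0 ≤ M := by rw [hM]; positivity
  have hP0 : 0 ≤ P := by rw [hP]; positivity
  have hN0 : 0 ≤ N := by rw [hN]; unfold H2norm; positivity
  have ha0 : 0 ≤ a := by rw [ha]; unfold hsNorm; positivity
  have hl2 : √(∫ x, ‖u x‖ ^ 2) ≤ 1 := by rw [hn]; simp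
  have hg : √(∫ x, ‖fderiv ℝ u x‖ ^ 2) ≤ N := hN ▸ aux_H2_grad u
  rw [← hN] at hK'
  have hm : ∀ j x, ‖mα α j x‖ ≤ M * a := fun j x => by
    rw [hM, ha]; exact (aux_m_bound hs hα h j).2 x
  have hmc : ∀ j, Continuous (mα α j) := fun j => (aux_m_bound hs hα h j).1
  have hpdm : ∀ j, AEStronglyMeasurable (fun x => pd u j x) volume := fun j => (aux_pd_memLp hu2 j).1
  have hum := hu1.1
  obtain ⟨hVm, hVb⟩ := aux_V_conv hV hu1 hK' hn
  have hVb' : ∀ x, |∫ y, V (x - y) * ‖u y‖ ^ 2| ≤ v * (K * N) := fun x =>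
    (hVb x).trans (by gcongr)
  obtain ⟨hd1, hd2⟩ := aux_divm hs hα h
  rw [← hP, ← ha] at hd2
  have b1 : auxBd (fun x => ∑ j : Fin 3, pd2 u j j x) (1 * N + 1 * N + 1 * N) := by
    have : ∀ j : Fin 3, auxBd (fun x => pd2 u j j x) (1 * N) := fun j =>
      aux_bd_of_le zero_le_one (hu3 j j).1 (hu3 j j) (fun x => (one_mul _).ge)
        (hN ▸ aux_H2_pd2 u j j)
    simp only [Fin.sum_univ_three]
    exact ((this 0).add (this 1)).add (this 2)
  have b1' : auxBd (fun x => -∑ j : Fin 3, pd2 u j j x) (1 * N + 1 * N + 1 * N) :=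
    ⟨b1.1, b1.2.1.neg, by
      have := b1.2.2
      rwa [← eLpNorm_neg] at this⟩
  have b2 : auxBd (fun x => 2 * Complex.I * divmα α x * u x) ((2 * (K * N)) * (P * a)) := by
    refine aux_bd_of_le (g := divmα α) (by positivity) ((hd1.1.const_mul _).mul hum) hd1 (fun x => ?_) hd2
    simp only [norm_mul, Complex.norm_I, Complex.norm_ofNat, mul_one]
    have := hK' x
    calc _ ≤ 2 * ‖divmα α x‖ * (K * N) := by gcongr
      _ = _ := by ring
  have hsum : ∀ (w : Fin 3 → ℂ) (x : EuclideanSpace ℝ (Fin 3)), (∀ j, ‖w j‖ ≤ M * a) →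
      ‖2 * Complex.I * ∑ j : Fin 3, w j * pd u j x‖ ≤ 6 * (M * a) * ‖fderiv ℝ u x‖ := by
    intro w x hw
    rw [norm_mul, norm_mul, Complex.norm_I, Complex.norm_ofNat, mul_one]
    have : ‖∑ j : Fin 3, w j * pd u j x‖ ≤ ∑ j : Fin 3, (M * a) * ‖fderiv ℝ u x‖ := by
      refine norm_sum_le_of_le _ fun j _ => ?_
      rw [norm_mul]
      exact mul_le_mul (hw j) (aux_pd_le ..) (norm_nonneg _) (by positivity)
    simp at this
    linarith
  have b3 : auxBd (fun x => 2 * Complex.I * ∑ j : Fin 3, mα α j x * pd u j x) ((6 * (M * a)) * N) := by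
    refine aux_bd_of_le (by positivity) ?_ hu2 (fun x => hsum _ x fun j => hm j x) hg
    refine AEStronglyMeasurable.const_mul ?_ _
    exact Finset.aestronglyMeasurable_fun_sum _ fun j _ => (hmc j).aestronglyMeasurable.mul (hpdm j)
  have b4 : auxBd (fun x => 2 * Complex.I * ∑ j : Fin 3, (starRingEnd ℂ) (mα α j x) * pd u j x) ((6 * (M * a)) * N) := by
    refine aux_bd_of_le (by positivity) ?_ hu2 (fun x => hsum _ x fun j => ?_) hg
    · refine AEStronglyMeasurable.const_mul ?_ _
      exact Finset.aestronglyMeasurable_fun_sum _ fun j _ =>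
        (Complex.continuous_conj.comp (hmc j)).aestronglyMeasurable.mul (hpdm j)
    · rw [RCLike.norm_conj]; exact hm j x
  have b5 : auxBd (fun x => (((∑ j : Fin 3, Fα α j x ^ 2 : ℝ)) : ℂ) * u x) (12 * (M * a) ^ 2 * 1) := by
    refine aux_bd_of_le (g := u) (by positivity) ?_ hu1 (fun x => ?_) hl2
    · refine AEStronglyMeasurable.mul ?_ hum
      apply Continuous.aestronglyMeasurable
      unfold Fα
      fun_prop
    · rw [norm_mul, Complex.norm_real]
      gcongr
      have : ‖∑ j : Fin 3, Fα α j x ^ 2‖ ≤ ∑ j : Fin 3, 4 * (M * a) ^ 2 := by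
        refine norm_sum_le_of_le _ fun j _ => ?_
        unfold Fα
        have h1 := (Complex.abs_re_le_norm (mα α j x)).trans (hm j x)
        rw [Real.norm_of_nonneg (by positivity), mul_pow, ← sq_abs (mα α j x).re]
        have h2 := pow_le_pow_left₀ (abs_nonneg _) h1 2
        linarith
      simp at this
      rw [Real.norm_eq_abs]
      simp only [Fin.sum_univ_three] at this ⊢
      linarith
  have b6 : auxBd (fun x => (((∫ y, V (x - y) * ‖u y‖ ^ 2 : ℝ)) : ℂ) * u x) ((v * (K * N)) * 1) := by
    refine aux_bd_of_le (g := u) (by positivity) ?_ hu1 (fun x => ?_) hl2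
    · exact AEStronglyMeasurable.mul (Complex.continuous_ofReal.comp_aestronglyMeasurable hVm) hum
    · rw [norm_mul, Complex.norm_real]
      gcongr
      exact hVb' x
  have hμ : |μshift V u α| ≤ 1 / 2 * (v * (K * N)) + (6 * N) * (M * a) + 12 * (M * a) * (M * a) := by
    have i2 := (memLp_two_iff_integrable_sq_norm hu1.1).1 hu1
    have c1 : |∫ x, ∫ y, V (x - y) * ‖u y‖ ^ 2 * ‖u x‖ ^ 2| ≤ v * (K * N) := by
      rw [← Real.norm_eq_abs]
      refine (norm_integral_le_of_norm_le (i2.const_mul (v * (K * N))) (Filter.Eventually.of_forall fun x => ?_)).trans ?_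
      · rw [integral_mul_const, norm_mul, Real.norm_of_nonneg (by positivity : 0 ≤ ‖u x‖ ^ 2)]
        gcongr
        exact hVb' x
      · rw [integral_const_mul, hn, mul_one]
    have c2 : |(∫ k, (starRingEnd ℂ) (α k) * fu u k).re| ≤ (6 * N) * (M * a) := by
      rw [hM, ha]
      refine aux_pair_bound hs hα h (by positivity) fun k => ?_
      refine (aux_f_bound hu1 hu2 k).trans ?_
      have := aux_ω_pos k
      rw [hn, Real.sqrt_one, one_mul]
      gcongr
    have c3 : |(∫ k, (starRingEnd ℂ) (α k) * gualpha u α k).re| ≤ 12 * (M * a) * (M * a) := by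
      have := aux_pair_bound hs hα h (f := gualpha u α) (D := 12 * (M * a)) (by positivity) fun k => ?_
      · rwa [← hM, ← ha] at this
      · have := aux_g_bound hu1 hm k
        rwa [hn, mul_one] at this
    unfold μshift
    refine (abs_add_three _ _ _).trans ?_
    rw [abs_mul, abs_of_pos (by norm_num : (0:ℝ) < 1 / 2)]
    gcongr
  have b7 : auxBd (fun x => ((μshift V u α : ℝ) : ℂ) * u x)
      ((1 / 2 * (v * (K * N)) + (6 * N) * (M * a) + 12 * (M * a) * (M * a)) * 1) := by
    refine aux_bd_of_le (g := u) (by positivity) (hum.const_mul _) hu1 (fun x => ?_) hl2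
    rw [norm_mul, Complex.norm_real]
    gcongr
    exact hμ
  exact (((((b1'.sub b2).sub b3).sub b4).add b5).add b6).sub b7

lemma aux_main (s : ℝ) (hs : 0 < s) (v : ℝ) (hv : 0 ≤ v) :
    ∃ C > 0, ∀ V : EuclideanSpace ℝ (Fin 3) → ℝ, MemLp V 2 volume →
      √(∫ x, ‖V x‖ ^ 2) ≤ v →
      ∀ (u α : EuclideanSpace ℝ (Fin 3) → ℂ),
        Differentiable ℝ u →
        (∀ j : Fin 3, Differentiable ℝ (fun x => pd u j x)) →
        MemLp u 2 volume →
        MemLp (fun x => fderiv ℝ u x) 2 volume →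
        (∀ i j : Fin 3, MemLp (fun x => pd2 u i j x) 2 volume) →
        (∫ x, ‖u x‖ ^ 2) = 1 →
        Measurable α →
        (∫⁻ k, ENNReal.ofReal (ω k ^ (2 * (1 + s)) * ‖α k‖ ^ 2) < ⊤) →
        MemLp (hMF V u α) 2 volume ∧
        eLpNorm (hMF V u α) 2 volume ≤
          ENNReal.ofReal (C * (H2norm u + H1norm u ^ 2) * (1 + hsNorm s α ^ 2)) := by
  obtain ⟨K, hK, hS⟩ := aux_sobolev
  set M := √(∫ k, ‖ω k ^ (-(3 / 2 + s))‖ ^ 2) with hM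
  set P := √((2 * π) ^ 3) with hP
  have hM0 : 0 ≤ M := by rw [hM]; positivity
  have hP0 : 0 ≤ P := by rw [hP]; positivity
  refine ⟨3 + 2 * K * P + 18 * M + 24 * M ^ 2 + 3 / 2 * v * K, by positivity, ?_⟩
  intro V hV hVv u α d1 d2 m1 m2 m3 hn hα h
  have hb := aux_hMF_bd hs hK hv hV hVv (fun x => hS u d1 d2 m1 m2 m3 x) d1 m1 m2 m3 hn hα h
    hM hP rfl rfl
  refine ⟨hb.2.1, (hb.mono ?_).2.2⟩
  have hN1 : 1 ≤ H2norm u := by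
    have := aux_H2_l2 u
    rwa [hn, Real.sqrt_one] at this
  have ha0 : 0 ≤ hsNorm s α := by unfold hsNorm; positivity
  have hH : 0 ≤ H1norm u ^ 2 := by positivity
  set N := H2norm u
  set a := hsNorm s α
  have ha1 : a ≤ 1 + a ^ 2 := by nlinarith [sq_nonneg (a - 1)]
  have hN0 : 0 ≤ N := by linarith
  have q1 : N ≤ N * (1 + a ^ 2) := by nlinarith [mul_nonneg hN0 (sq_nonneg a)]
  have q2 : N * a ≤ N * (1 + a ^ 2) := by gcongr
  have q3 : a ^ 2 ≤ N * (1 + a ^ 2) := by nlinarith [sq_nonneg a]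
  set Z := N * (1 + a ^ 2)
  calc _ = 3 * N + 2 * K * P * (N * a) + 18 * M * (N * a) + 24 * M ^ 2 * a ^ 2
          + 3 / 2 * v * K * N := by ring
    _ ≤ 3 * Z + 2 * K * P * Z + 18 * M * Z + 24 * M ^ 2 * Z + 3 / 2 * v * K * Z := by gcongr
    _ = (3 + 2 * K * P + 18 * M + 24 * M ^ 2 + 3 / 2 * v * K) * N * (1 + a ^ 2) := by ring
    _ ≤ _ := by
      gcongr
      linarith

end

/-- For every `s > 0` there is `C > 0` such that, with `V` the effective pair potential,
for every twice differentiable `u` with `u, ∂_j u, ∂_i∂_j u ∈ L²`, `‖u‖_{L²} = 1`, and every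
`α` with `‖α‖_{h_{1+s}} < ∞`: `h_{u,α}u ∈ L²` and
`‖h_{u,α}u‖_{L²} ≤ C(‖u‖_{H²} + ‖u‖_{H¹}²)(1 + ‖α‖_{h_s}²)`. -/
theorem hMF_bound (s : ℝ) (hs : 0 < s) :
    ∃ C > 0, ∀ V : EuclideanSpace ℝ (Fin 3) → ℝ, MemLp V 2 volume →
      (∀ φ : SchwartzMap (EuclideanSpace ℝ (Fin 3)) ℂ,
        (∫ x, ((V x : ℝ) : ℂ) *
            ∫ k, Complex.exp (-(Complex.I * ((inner ℝ k x : ℝ) : ℂ))) * φ k) =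
          ∫ k, ((vker k : ℝ) : ℂ) * φ k) →
      ∀ (u α : EuclideanSpace ℝ (Fin 3) → ℂ),
        Differentiable ℝ u →
        (∀ j : Fin 3, Differentiable ℝ (fun x => pd u j x)) →
        MemLp u 2 volume →
        MemLp (fun x => fderiv ℝ u x) 2 volume →
        (∀ i j : Fin 3, MemLp (fun x => pd2 u i j x) 2 volume) →
        (∫ x, ‖u x‖ ^ 2) = 1 →
        Measurable α →
        (∫⁻ k, ENNReal.ofReal (ω k ^ (2 * (1 + s)) * ‖α k‖ ^ 2) < ⊤) →
        MemLp (hMF V u α) 2 volume ∧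
        eLpNorm (hMF V u α) 2 volume ≤
          ENNReal.ofReal (C * (H2norm u + H1norm u ^ 2) * (1 + hsNorm s α ^ 2)) := by
  by_cases hex : ∃ W : EuclideanSpace ℝ (Fin 3) → ℝ, MemLp W 2 volume ∧
      (∀ φ : SchwartzMap (EuclideanSpace ℝ (Fin 3)) ℂ,
        (∫ x, ((W x : ℝ) : ℂ) *
            ∫ k, Complex.exp (-(Complex.I * ((inner ℝ k x : ℝ) : ℂ))) * φ k) =
          ∫ k, ((vker k : ℝ) : ℂ) * φ k)
  · obtain ⟨W, hW, hW'⟩ := hex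
    obtain ⟨C, hC, hmain⟩ := aux_main s hs (Real.sqrt (∫ x, ‖W x‖ ^ 2)) (Real.sqrt_nonneg _)
    refine ⟨C, hC, fun V hV hV' => hmain V hV (le_of_eq ?_)⟩
    have hae := aux_V_unique hV hW (fun φ => (hV' φ).trans (hW' φ).symm)
    congr 1
    apply integral_congr_ae
    filter_upwards [hae] with x hx
    rw [hx]
  · exact ⟨1, one_pos, fun V hV hV' => absurd ⟨V, hV, hV'⟩ hex⟩

end
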